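/- Let P ⊆ ℝ² be an open convex set, e ∈ S¹, and let γ : I → ℝ² be a C¹ curve with ⟨γ'(t),e⟩ ≥ 0 for all t ∈ I. Then |∫_{γ⁻¹(P)} ⟨γ'(t), e^⊥⟩ dt| ≤ 6 · diam_{e^⊥}(P). -/

import Mathlib

/-!
In the orthonormal coordinates `x = ⟪γ, e⟫`, `y = ⟪γ, e^⊥⟫` the abscissa `x` is nondecreasing and
`P` is the region `g < y < h` over an open interval, with `g` convex and `h` concave. Both edges
take values in an interval of length `D = diamv (perp e) P`.

Consider the clamped height `f = max (g ∘ x) (min y (h ∘ x))`. While `γ` is in `P` one has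
`f' = y'`; while it is above or below `P`, `f` coincides with `h ∘ x` or `g ∘ x`. Hence the integral
of `y'` over `γ ⁻¹' P` differs from the increment of `f`, which is at most `D`, by at most the
variations of `g ∘ x` and `h ∘ x` (`abs_integral_between_le`). A concave function along a monotone
path is unimodal, so each variation is at most `2 * D` (`concave_comp_variation`). The total is
`5 * D`.

The fundamental theorem of calculus for `f` needs absolute continuity. The edges are Lipschitz on
compact parts of the shadow of `P`, so the estimate is proved there first and then extended by
exhaustion (`abs_integral_le`).
-/

open MeasureTheory Filter Metric Set Topology RealInnerProductSpace ENNReal NNReal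

noncomputable section

/-- The Euclidean plane. -/
abbrev E2 := EuclideanSpace ℝ (Fin 2)

/-- Rotation of a planar vector by `π/2`. -/
def perp (v : E2) : E2 := (WithLp.equiv 2 (Fin 2 → ℝ)).symm ![-(v 1), v 0]

/-- `IsC1Curve a b γ γ'` : `γ` restricted to the compact nondegenerate interval `[a,b]`
is a C¹ curve with (one-sided at endpoints) derivative `γ'`, continuous and of unit
norm on `[a,b]`. -/
def IsC1Curve (a b : ℝ) (γ γ' : ℝ → E2) : Prop :=
  a < b ∧ ContinuousOn γ' (Set.Icc a b) ∧
    (∀ t ∈ Set.Icc a b, HasDerivWithinAt γ (γ' t) (Set.Icc a b) t) ∧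
    (∀ t ∈ Set.Icc a b, ‖γ' t‖ = 1)

/-- `diam_v(W) = sup {⟨y − x, v⟩ : x, y ∈ W}` as an extended nonnegative real. -/
def diamv (v : E2) (W : Set E2) : ℝ≥0∞ :=
  ⨆ x ∈ W, ⨆ y ∈ W, ENNReal.ofReal ⟪y - x, v⟫

/-! ### The graph description of a planar convex set -/

/-- The projection of a planar set to the first coordinate axis. -/
def shadow (Q : Set (ℝ × ℝ)) : Set ℝ := Set.image Prod.fst Q

/-- The height of the upper boundary of `Q` above `x`; meaningful when `x ∈ shadow Q` and the
vertical slice of `Q` at `x` is bounded above. -/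
def upperEdge (Q : Set (ℝ × ℝ)) (x : ℝ) : ℝ := sSup {y | (x, y) ∈ Q}

/-- The mirror image of `Q` in the first coordinate axis. -/
def reflect (Q : Set (ℝ × ℝ)) : Set (ℝ × ℝ) := {p | (p.1, -p.2) ∈ Q}

/-- The height of the lower boundary of `Q` above `x`, encoded through the reflection so that
facts about `upperEdge` carry over. -/
def lowerEdge (Q : Set (ℝ × ℝ)) (x : ℝ) : ℝ := -upperEdge (reflect Q) x

/-- `Q` has vertical extent at most `D`. -/
def HeightLE (Q : Set (ℝ × ℝ)) (D : ℝ) : Prop := ∀ p ∈ Q, ∀ q ∈ Q, q.2 - p.2 ≤ D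

lemma mem_shadow {Q : Set (ℝ × ℝ)} {x : ℝ} : x ∈ shadow Q ↔ ∃ y, (x, y) ∈ Q := by
  simp [shadow]

lemma isOpen_shadow {Q : Set (ℝ × ℝ)} (hQ : IsOpen Q) : IsOpen (shadow Q) :=
  isOpenMap_fst Q hQ

lemma convex_shadow {Q : Set (ℝ × ℝ)} (hQ : Convex ℝ Q) : Convex ℝ (shadow Q) :=
  hQ.linear_image (LinearMap.fst ℝ ℝ ℝ)

lemma shadow_reflect (Q : Set (ℝ × ℝ)) : shadow (reflect Q) = shadow Q := by
  ext x
  simp only [mem_shadow, reflect, mem_ofPred_eq]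
  exact ⟨fun ⟨y, hy⟩ => ⟨-y, hy⟩, fun ⟨y, hy⟩ => ⟨-y, by simpa using hy⟩⟩

lemma isOpen_reflect {Q : Set (ℝ × ℝ)} (hQ : IsOpen Q) : IsOpen (reflect Q) :=
  hQ.preimage (f := fun p : ℝ × ℝ => (p.1, -p.2)) (by fun_prop)

lemma convex_reflect {Q : Set (ℝ × ℝ)} (hQ : Convex ℝ Q) : Convex ℝ (reflect Q) := by
  intro p hp q hq a b ha hb hab
  have h := hQ hp hq ha hb hab
  simp only [reflect, mem_ofPred_eq]
  convert h using 1
  ext <;> simp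
  ring

lemma HeightLE.reflect {Q : Set (ℝ × ℝ)} {D : ℝ} (h : HeightLE Q D) :
    HeightLE (reflect Q) D := by
  intro p hp q hq
  have := h _ hq _ hp
  simp only at this
  linarith

lemma HeightLE.bddAbove {Q : Set (ℝ × ℝ)} {D : ℝ} (h : HeightLE Q D) (x : ℝ) :
    BddAbove {y | (x, y) ∈ Q} := by
  rcases Set.eq_empty_or_nonempty {y | (x, y) ∈ Q} with h0 | ⟨y₀, hy₀⟩
  · rw [h0]; exact bddAbove_empty
  · refine ⟨y₀ + D, fun y hy => ?_⟩
    have := h _ hy₀ _ hy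
    simp only at this
    linarith

lemma le_upperEdge {Q : Set (ℝ × ℝ)} {D : ℝ} (h : HeightLE Q D) {x y : ℝ} (hxy : (x, y) ∈ Q) :
    y ≤ upperEdge Q x :=
  le_csSup (h.bddAbove x) hxy

lemma lt_upperEdge {Q : Set (ℝ × ℝ)} {D : ℝ} (hQ : IsOpen Q) (h : HeightLE Q D) {x y : ℝ}
    (hxy : (x, y) ∈ Q) : y < upperEdge Q x := by
  have ho : IsOpen {z | (x, z) ∈ Q} := hQ.preimage (f := fun z : ℝ => (x, z)) (by fun_prop)
  obtain ⟨ε, hε, hb⟩ := Metric.isOpen_iff.1 ho y hxy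
  have : (x, y + ε / 2) ∈ Q := hb (by simp [abs_of_pos hε, hε])
  have := le_upperEdge h this
  linarith

lemma exists_lt_of_lt_upperEdge {Q : Set (ℝ × ℝ)} {x c : ℝ} (hx : x ∈ shadow Q)
    (hc : c < upperEdge Q x) : ∃ y, (x, y) ∈ Q ∧ c < y :=
  exists_lt_of_lt_csSup (mem_shadow.1 hx) hc

lemma concaveOn_upperEdge {Q : Set (ℝ × ℝ)} {D : ℝ} (hQ : Convex ℝ Q) (h : HeightLE Q D) :
    ConcaveOn ℝ (shadow Q) (upperEdge Q) := by
  refine ⟨convex_shadow hQ, fun x hx z hz a b ha hb hab => ?_⟩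
  refine le_of_forall_pos_le_add fun ε hε => ?_
  obtain ⟨y, hy, hy'⟩ := exists_lt_of_lt_upperEdge hx (sub_lt_self (upperEdge Q x) hε)
  obtain ⟨w, hw, hw'⟩ := exists_lt_of_lt_upperEdge hz (sub_lt_self (upperEdge Q z) hε)
  have h1 := le_upperEdge h (x := a • x + b • z) (y := a • y + b • w) (hQ hy hw ha hb hab)
  simp only [smul_eq_mul] at h1 ⊢
  have h2 : a * (upperEdge Q x - ε) ≤ a * y := by gcongr
  have h3 : b * (upperEdge Q z - ε) ≤ b * w := by gcongr
  have h4 : a * ε + b * ε = ε := by rw [← add_mul, hab, one_mul]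
  linarith

lemma mem_iff_lowerEdge_upperEdge {Q : Set (ℝ × ℝ)} {D : ℝ} (hQo : IsOpen Q) (hQ : Convex ℝ Q)
    (h : HeightLE Q D) {x y : ℝ} (hx : x ∈ shadow Q) :
    (x, y) ∈ Q ↔ lowerEdge Q x < y ∧ y < upperEdge Q x := by
  constructor
  · intro hxy
    refine ⟨?_, lt_upperEdge hQo h hxy⟩
    have := lt_upperEdge (isOpen_reflect hQo) h.reflect (x := x) (y := -y) (by simpa [reflect])
    simp only [lowerEdge]
    linarith
  · rintro ⟨h1, h2⟩
    obtain ⟨u, hu, hu'⟩ := exists_lt_of_lt_upperEdge hx h2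
    obtain ⟨v, hv, hv'⟩ := exists_lt_of_lt_upperEdge (Q := reflect Q) (x := x) (c := -y)
      (by rwa [shadow_reflect]) (by simp only [lowerEdge] at h1; linarith)
    have hc : Convex ℝ {z | (x, z) ∈ Q} := by
      intro p hp q hq a b ha hb hab
      have := hQ hp hq ha hb hab
      simp only [mem_ofPred_eq]
      convert this using 1
      ext <;> simp
      rw [← add_mul, hab, one_mul]
    exact hc.ordConnected.out (show (x, -v) ∈ Q from hv) hu ⟨by linarith, hu'.le⟩

lemma lowerEdge_le_upperEdge {Q : Set (ℝ × ℝ)} {D : ℝ} (hQo : IsOpen Q) (hQ : Convex ℝ Q)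
    (h : HeightLE Q D) {x : ℝ} (hx : x ∈ shadow Q) : lowerEdge Q x ≤ upperEdge Q x := by
  obtain ⟨y, hy⟩ := mem_shadow.1 hx
  have := (mem_iff_lowerEdge_upperEdge hQo hQ h hx).1 hy
  linarith

lemma upperEdge_sub_lowerEdge_le {Q : Set (ℝ × ℝ)} {D : ℝ} (h : HeightLE Q D) {x z : ℝ}
    (hx : x ∈ shadow Q) (hz : z ∈ shadow Q) : upperEdge Q x - lowerEdge Q z ≤ D := by
  refine le_of_forall_pos_le_add fun ε hε => ?_
  obtain ⟨y, hy, hy'⟩ := exists_lt_of_lt_upperEdge hx (sub_lt_self (upperEdge Q x) (half_pos hε))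
  obtain ⟨w, hw, hw'⟩ := exists_lt_of_lt_upperEdge (Q := reflect Q) (x := z)
    (by rwa [shadow_reflect]) (sub_lt_self (upperEdge (reflect Q) z) (half_pos hε))
  have := h (z, -w) hw (x, y) hy
  simp only [lowerEdge] at this ⊢
  linarith

/-! ### Variation of concave functions along monotone paths -/

/-- A Lipschitz function that increases up to `c` and decreases afterwards has the total
variation one expects. -/
lemma integral_abs_deriv_unimodal {H : ℝ → ℝ} {s c t : ℝ} {K : ℝ≥0} (hsc : s ≤ c) (hct : c ≤ t)
    (hL : LipschitzOnWith K H (Icc s t)) (hm : MonotoneOn H (Icc s c))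
    (ha : AntitoneOn H (Icc c t)) :
    ∫ u in s..t, |deriv H u| = (H c - H s) + (H c - H t) := by
  have hL1 : AbsolutelyContinuousOnInterval H s c := by
    apply LipschitzOnWith.absolutelyContinuousOnInterval (K := K)
    rw [uIcc_of_le hsc]
    exact hL.mono (Icc_subset_Icc_right hct)
  have hL2 : AbsolutelyContinuousOnInterval H c t := by
    apply LipschitzOnWith.absolutelyContinuousOnInterval (K := K)
    rw [uIcc_of_le hct]
    exact hL.mono (Icc_subset_Icc_left hsc)
  rw [← intervalIntegral.integral_add_adjacent_intervals (b := c)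
    hL1.intervalIntegrable_deriv.abs hL2.intervalIntegrable_deriv.abs]
  congr 1
  · rw [← hL1.integral_deriv_eq_sub]
    refine intervalIntegral.integral_congr_ae ?_
    filter_upwards [compl_mem_ae_iff.2 (measure_singleton c)] with u hu hu'
    rw [uIoc_of_le hsc] at hu'
    have hn : Icc s c ∈ 𝓝 u := Icc_mem_nhds hu'.1 (lt_of_le_of_ne hu'.2 hu)
    rw [abs_of_nonneg]
    rw [← derivWithin_of_mem_nhds hn]
    exact hm.derivWithin_nonneg
  · rw [← neg_sub (H t), ← hL2.integral_deriv_eq_sub, ← intervalIntegral.integral_neg]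
    refine intervalIntegral.integral_congr_ae ?_
    filter_upwards [compl_mem_ae_iff.2 (measure_singleton t)] with u hu hu'
    rw [uIoc_of_le hct] at hu'
    have hn : Icc c t ∈ 𝓝 u := Icc_mem_nhds hu'.1 (lt_of_le_of_ne hu'.2 hu)
    rw [abs_of_nonpos]
    rw [← derivWithin_of_mem_nhds hn]
    exact ha.derivWithin_nonpos

/-- A concave function composed with a monotone path is unimodal, so its variation is at most
twice its oscillation. -/
lemma concave_comp_variation {h x : ℝ → ℝ} {U : Set ℝ} {s t D : ℝ} {K : ℝ≥0} (hst : s ≤ t)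
    (hU : IsOpen U) (hh : ConcaveOn ℝ U h) (hD : ∀ u ∈ U, ∀ v ∈ U, h u - h v ≤ D)
    (hx : LipschitzOnWith K x (Icc s t)) (hxm : MonotoneOn x (Icc s t))
    (hxU : MapsTo x (Icc s t) U) :
    (∃ C, LipschitzOnWith C (h ∘ x) (Icc s t)) ∧ ∫ u in s..t, |deriv (h ∘ x) u| ≤ 2 * D := by
  obtain ⟨C, hC⟩ := ((hh.locallyLipschitzOn hU).mono hxU.image_subset)
    |>.exists_lipschitzOnWith_of_compact (isCompact_Icc.image_of_continuousOn hx.continuousOn)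
  have hL : LipschitzOnWith (C * K) (h ∘ x) (Icc s t) := hC.comp hx (mapsTo_image x _)
  refine ⟨⟨_, hL⟩, ?_⟩
  obtain ⟨c, hc, hmax⟩ := isCompact_Icc.exists_isMaxOn (nonempty_Icc.2 hst) hL.continuousOn
  have hs : s ∈ Icc s t := left_mem_Icc.2 hst
  have ht : t ∈ Icc s t := right_mem_Icc.2 hst
  rw [integral_abs_deriv_unimodal hc.1 hc.2 hL]
  · have h1 := hD _ (hxU hc) _ (hxU hs)
    have h2 := hD _ (hxU hc) _ (hxU ht)
    simp only [Function.comp_apply]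
    linarith
  · intro u hu v hv huv
    have hu' : u ∈ Icc s t := ⟨hu.1, hu.2.trans hc.2⟩
    have hv' : v ∈ Icc s t := ⟨hv.1, hv.2.trans hc.2⟩
    have := hh.min_le_of_mem_Icc (hxU hu') (hxU hc) ⟨hxm hu' hv' huv, hxm hv' hc hv.2⟩
    have h3 : h (x u) ≤ h (x c) := hmax hu'
    rwa [min_eq_left h3] at this
  · intro u hu v hv huv
    have hu' : u ∈ Icc s t := ⟨hc.1.trans hu.1, hu.2⟩
    have hv' : v ∈ Icc s t := ⟨hc.1.trans hv.1, hv.2⟩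
    have := hh.min_le_of_mem_Icc (hxU hc) (hxU hv') ⟨hxm hc hu' hu.1, hxm hu' hv' huv⟩
    have h3 : h (x v) ≤ h (x c) := hmax hv'
    rwa [min_eq_right h3] at this

/-! ### The clamped height -/

/-- The clamped height `f = max G (min y H)` satisfies `f' = y'` while `G < y < H`; at every
other time `f` meets the barrier `H` from below or `G` from above, so that the first-order
condition gives `f' = H'` or `f' = G'` wherever these derivatives exist. Integrating `f'` bounds
the contribution of `y'` from the times between the barriers. -/
lemma abs_integral_between_le {y y' G H : ℝ → ℝ} {s t D : ℝ} {Ky KG KH : ℝ≥0} (hst : s ≤ t)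
    (hy : LipschitzOnWith Ky y (Icc s t)) (hG : LipschitzOnWith KG G (Icc s t))
    (hH : LipschitzOnWith KH H (Icc s t)) (hGH : ∀ u ∈ Icc s t, G u ≤ H u)
    (hyd : ∀ u ∈ Ioo s t, HasDerivAt y (y' u) u) (hy'c : ContinuousOn y' (Icc s t))
    (hD : ∀ u ∈ Icc s t, ∀ v ∈ Icc s t, H u - G v ≤ D)
    {A : Set ℝ} (hAm : MeasurableSet A) (hA : ∀ u ∈ Icc s t, u ∈ A ↔ G u < y u ∧ y u < H u) :
    |∫ u in A ∩ Icc s t, y' u| ≤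
      D + (∫ u in s..t, |deriv G u|) + ∫ u in s..t, |deriv H u| := by
  set f : ℝ → ℝ := fun u => max (G u) (min (y u) (H u)) with hf
  have hfL : LipschitzOnWith (max KG (max Ky KH)) f (Icc s t) := by
    rw [lipschitzOnWith_iff_restrict] at *
    exact hG.max (hy.min hH)
  have ac : ∀ {K : ℝ≥0} {φ : ℝ → ℝ}, LipschitzOnWith K φ (Icc s t) →
      AbsolutelyContinuousOnInterval φ s t := fun h =>
    LipschitzOnWith.absolutelyContinuousOnInterval (by rwa [uIcc_of_le hst])
  have hfa := ac hfL
  have hGa := ac hG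
  have hHa := ac hH
  have hs : s ∈ Icc s t := left_mem_Icc.2 hst
  have ht : t ∈ Icc s t := right_mem_Icc.2 hst
  have hGf : ∀ u, G u ≤ f u := fun u => le_max_left _ _
  have hfH : ∀ u ∈ Icc s t, f u ≤ H u := fun u hu => max_le (hGH u hu) (min_le_right _ _)
  have hfD : |f t - f s| ≤ D := by
    have h1 := hD t ht s hs
    have h2 := hD s hs t ht
    have h3 := hfH t ht
    have h4 := hfH s hs
    have h5 := hGf t
    have h6 := hGf s
    rw [abs_le]
    constructor <;> linarith
  have hyI : IntervalIntegrable (A.indicator y') volume s t := by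
    have : IntegrableOn y' (Icc s t) := hy'c.integrableOn_Icc
    rw [intervalIntegrable_iff_integrableOn_Icc_of_le hst]
    exact this.indicator hAm
  have hint : ∫ u in A ∩ Icc s t, y' u = ∫ u in s..t, A.indicator y' u := by
    rw [intervalIntegral.integral_of_le hst, ← integral_Icc_eq_integral_Ioc,
      setIntegral_indicator hAm, inter_comm]
  have key : ∀ᵐ u, u ∈ uIoc s t → ‖deriv f u - A.indicator y' u‖ ≤ |deriv G u| + |deriv H u| := by
    filter_upwards [hfa.ae_differentiableAt, hGa.ae_differentiableAt, hHa.ae_differentiableAt,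
      compl_mem_ae_iff.2 (measure_singleton t)] with u hfd hGd hHd hut hu
    have hu1 : u ∈ uIcc s t := uIoc_subset_uIcc hu
    specialize hfd hu1
    specialize hGd hu1
    specialize hHd hu1
    rw [uIcc_of_le hst] at hu1
    rw [uIoc_of_le hst] at hu
    have hu2 : u ∈ Ioo s t := ⟨hu.1, lt_of_le_of_ne hu.2 hut⟩
    have hn : Icc s t ∈ 𝓝 u := Icc_mem_nhds hu2.1 hu2.2
    have cy := hy.continuousOn.continuousAt hn
    have cG := hG.continuousOn.continuousAt hn
    have cH := hH.continuousOn.continuousAt hn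
    rw [Real.norm_eq_abs]
    by_cases huA : u ∈ A
    · obtain ⟨h1, h2⟩ := (hA u hu1).1 huA
      have he : f =ᶠ[𝓝 u] y := by
        filter_upwards [cG.eventually_lt cy h1, cy.eventually_lt cH h2] with v hv1 hv2
        simp only [hf]
        rw [min_eq_left hv2.le, max_eq_right hv1.le]
      rw [he.deriv_eq, (hyd u hu2).deriv, indicator_of_mem huA, sub_self, abs_zero]
      positivity
    · rw [indicator_of_notMem huA, sub_zero]
      rcases le_or_gt (y u) (G u) with h | h
      · have hfu : f u = G u := max_eq_left ((min_le_left _ _).trans h)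
        -- `f ≥ G` with equality at `u`.
        have hmin : IsLocalMin (f - G) u := by
          filter_upwards with v
          have := hGf v
          simp only [Pi.sub_apply, hfu]
          linarith
        have h0 := hmin.deriv_eq_zero
        rw [deriv_sub hfd hGd, sub_eq_zero] at h0
        rw [h0]
        linarith [abs_nonneg (deriv H u)]
      · have h' : H u ≤ y u := not_lt.1 fun h2 => huA ((hA u hu1).2 ⟨h, h2⟩)
        have hfu : f u = H u := by
          simp only [hf]
          rw [min_eq_right h', max_eq_right (hGH u hu1)]
        -- `f ≤ H` with equality at `u`.
        have hmin : IsLocalMin (H - f) u := by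
          filter_upwards [hn] with v hv
          have := hfH v hv
          simp only [Pi.sub_apply, hfu]
          linarith
        have h0 := hmin.deriv_eq_zero
        rw [deriv_sub hHd hfd, sub_eq_zero] at h0
        rw [← h0]
        linarith [abs_nonneg (deriv G u)]
  have hbd := intervalIntegral.norm_integral_le_of_norm_le hst
    (f := fun u => deriv f u - A.indicator y' u) (by
      filter_upwards [key] with u hu hu'
      exact hu (by rwa [uIoc_of_le hst]))
    (hGa.intervalIntegrable_deriv.abs.add hHa.intervalIntegrable_deriv.abs)
  rw [intervalIntegral.integral_sub hfa.intervalIntegrable_deriv hyI, hfa.integral_deriv_eq_sub,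
    intervalIntegral.integral_add hGa.intervalIntegrable_deriv.abs
      hHa.intervalIntegrable_deriv.abs, Real.norm_eq_abs] at hbd
  rw [hint]
  rw [abs_le] at *
  constructor <;> linarith [hbd.1, hbd.2, hfD.1, hfD.2]

/-! ### The estimate in coordinates -/

/-- The estimate on a time interval on which the path stays over a compact part of the shadow,
where the two edges of `Q` are Lipschitz. -/
lemma abs_integral_le_of_mem_shadow {Q : Set (ℝ × ℝ)} {D : ℝ} (hQo : IsOpen Q)
    (hQ : Convex ℝ Q) (hD : HeightLE Q D) {x y y' : ℝ → ℝ} {s t : ℝ} {K : ℝ≥0} (hst : s ≤ t)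
    (hx : LipschitzOnWith K x (Icc s t)) (hxm : MonotoneOn x (Icc s t))
    (hy : LipschitzOnWith K y (Icc s t)) (hyd : ∀ u ∈ Ioo s t, HasDerivAt y (y' u) u)
    (hy'c : ContinuousOn y' (Icc s t)) (hxU : MapsTo x (Icc s t) (shadow Q))
    {A : Set ℝ} (hAm : MeasurableSet A) (hA : ∀ u ∈ Icc s t, u ∈ A ↔ (x u, y u) ∈ Q) :
    |∫ u in A ∩ Icc s t, y' u| ≤ 5 * D := by
  have osc : ∀ {R : Set (ℝ × ℝ)}, IsOpen R → Convex ℝ R → HeightLE R D →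
      ∀ u ∈ shadow R, ∀ v ∈ shadow R, upperEdge R u - upperEdge R v ≤ D := by
    intro R hRo hR hRD u hu v hv
    have h1 := upperEdge_sub_lowerEdge_le hRD hu hv
    have h2 := lowerEdge_le_upperEdge hRo hR hRD hv
    linarith
  have hxU' : MapsTo x (Icc s t) (shadow (reflect Q)) := by rwa [shadow_reflect]
  obtain ⟨⟨KH, hH⟩, hHv⟩ := concave_comp_variation hst (isOpen_shadow hQo)
    (concaveOn_upperEdge hQ hD) (osc hQo hQ hD) hx hxm hxU
  obtain ⟨⟨KG, hG⟩, hGv⟩ := concave_comp_variation hst (isOpen_shadow (isOpen_reflect hQo))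
    (concaveOn_upperEdge (convex_reflect hQ) hD.reflect)
    (osc (isOpen_reflect hQo) (convex_reflect hQ) hD.reflect) hx hxm hxU'
  have hG' : LipschitzOnWith KG (lowerEdge Q ∘ x) (Icc s t) := hG.neg
  have hGv' : ∫ u in s..t, |deriv (lowerEdge Q ∘ x) u| ≤ 2 * D := by
    have : lowerEdge Q ∘ x = -(upperEdge (reflect Q) ∘ x) := rfl
    simpa only [this, deriv.neg', deriv.neg, abs_neg] using hGv
  have := abs_integral_between_le (D := D) hst hy hG' hH
    (fun u hu => lowerEdge_le_upperEdge hQo hQ hD (hxU hu)) hyd hy'c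
    (fun u hu v hv => upperEdge_sub_lowerEdge_le hD (hxU hu) (hxU hv)) hAm
    (fun u hu => (hA u hu).trans (mem_iff_lowerEdge_upperEdge hQo hQ hD (hxU hu)))
  linarith

/-- The set of times spent over the shadow is an interval, but the edges of `Q` may fail to be
Lipschitz near its ends; exhausting it by compact intervals costs an arbitrarily small error. -/
lemma abs_integral_le {Q : Set (ℝ × ℝ)} {D : ℝ} (hQo : IsOpen Q)
    (hQ : Convex ℝ Q) (hD : HeightLE Q D) (hD0 : 0 ≤ D) {x y y' : ℝ → ℝ} {a b : ℝ}
    (hx : LipschitzOnWith 1 x (Icc a b)) (hxm : MonotoneOn x (Icc a b))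
    (hy : LipschitzOnWith 1 y (Icc a b)) (hyd : ∀ u ∈ Ioo a b, HasDerivAt y (y' u) u)
    (hy'c : ContinuousOn y' (Icc a b)) (hy'1 : ∀ u ∈ Icc a b, |y' u| ≤ 1)
    {A : Set ℝ} (hAm : MeasurableSet A) (hAab : A ⊆ Icc a b)
    (hA : ∀ u ∈ Icc a b, u ∈ A ↔ (x u, y u) ∈ Q) :
    |∫ u in A, y' u| ≤ 5 * D := by
  rcases A.eq_empty_or_nonempty with rfl | hne
  · simpa using hD0
  have hbb : BddBelow A := bddBelow_Icc.mono hAab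
  have hba : BddAbove A := bddAbove_Icc.mono hAab
  refine le_of_forall_pos_le_add fun ε hε => ?_
  obtain ⟨s₀, hs₀, hs₀'⟩ := exists_lt_of_csInf_lt hne (lt_add_of_pos_right (sInf A) (half_pos hε))
  obtain ⟨t₀, ht₀, ht₀'⟩ := exists_lt_of_lt_csSup hne (sub_lt_self (sSup A) (half_pos hε))
  obtain ⟨s, t, hs, ht, hst, hs', ht'⟩ : ∃ s t, s ∈ A ∧ t ∈ A ∧ s ≤ t ∧
      s < sInf A + ε / 2 ∧ sSup A - ε / 2 < t := by
    rcases le_total s₀ t₀ with h | h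
    · exact ⟨s₀, t₀, hs₀, ht₀, h, hs₀', ht₀'⟩
    · exact ⟨t₀, s₀, ht₀, hs₀, h, by linarith, by linarith⟩
  have hsub : Icc s t ⊆ Icc a b := Icc_subset_Icc (hAab hs).1 (hAab ht).2
  have hint : IntegrableOn y' A := hy'c.integrableOn_Icc.mono_set hAab
  have hxU : MapsTo x (Icc s t) (shadow Q) := by
    intro u hu
    refine (convex_shadow hQ).ordConnected.out (mem_shadow.2 ⟨_, (hA s (hAab hs)).1 hs⟩)
      (mem_shadow.2 ⟨_, (hA t (hAab ht)).1 ht⟩) ⟨?_, ?_⟩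
    · exact hxm (hAab hs) (hsub hu) hu.1
    · exact hxm (hsub hu) (hAab ht) hu.2
  have h1 := abs_integral_le_of_mem_shadow hQo hQ hD hst (hx.mono hsub) (hxm.mono hsub)
    (hy.mono hsub) (fun u hu => hyd u ⟨(hAab hs).1.trans_lt hu.1, hu.2.trans_le (hAab ht).2⟩)
    (hy'c.mono hsub) hxU hAm (fun u hu => hA u (hsub hu))
  have hvol : volume (A \ Icc s t) ≤ ENNReal.ofReal ε := by
    have hcov : A \ Icc s t ⊆ Icc (sInf A) s ∪ Icc t (sSup A) := by
      rintro u ⟨hu, hu'⟩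
      rcases le_total u s with h | h
      · exact Or.inl ⟨csInf_le hbb hu, h⟩
      · refine Or.inr ⟨?_, le_csSup hba hu⟩
        by_contra! h3
        exact hu' ⟨h, h3.le⟩
    refine (measure_mono hcov).trans ((measure_union_le _ _).trans ?_)
    rw [Real.volume_Icc, Real.volume_Icc, ← ENNReal.ofReal_add]
    · exact ENNReal.ofReal_le_ofReal (by linarith)
    · linarith [csInf_le hbb hs]
    · linarith [le_csSup hba ht]
  have h2 : |∫ u in A \ Icc s t, y' u| ≤ ε := by
    have := norm_setIntegral_le_of_norm_le_const (μ := volume) (s := A \ Icc s t) (f := y')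
      (C := 1) (hvol.trans_lt ENNReal.ofReal_lt_top) (fun u hu => hy'1 u (hAab hu.1))
    rw [one_mul] at this
    exact this.trans (ENNReal.toReal_le_of_le_ofReal hε.le hvol)
  rw [← integral_inter_add_sdiff measurableSet_Icc hint]
  exact (abs_add_le _ _).trans (add_le_add h1 h2)

/-! ### Orthonormal coordinates -/

lemma inner_eq_coords (v w : E2) : ⟪v, w⟫ = v 0 * w 0 + v 1 * w 1 := by
  simp [PiLp.inner_apply, Fin.sum_univ_two]
  ring

lemma perp_zero (v : E2) : perp v 0 = -v 1 := rfl

lemma perp_one (v : E2) : perp v 1 = v 0 := rfl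

/-- If `P ⊆ ℝ²` is open and convex, `e ∈ S¹` and `γ` is a C¹ curve with
`⟨γ'(t),e⟩ ≥ 0` for all `t`, then `|∫_{γ⁻¹(P)} ⟨γ'(t), e^⊥⟩ dt| ≤ 6 diam_{e^⊥}(P)`. -/
theorem stmt18 (P : Set E2) (hPo : IsOpen P) (hPc : Convex ℝ P)
    (e : E2) (he : e ∈ sphere (0:E2) 1)
    (a b : ℝ) (γ γ' : ℝ → E2) (hγ : IsC1Curve a b γ γ')
    (hdir : ∀ t ∈ Set.Icc a b, 0 ≤ ⟪γ' t, e⟫) :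
    ENNReal.ofReal |∫ t in γ ⁻¹' P ∩ Set.Icc a b, ⟪γ' t, perp e⟫|
      ≤ 6 * diamv (perp e) P := by
  obtain ⟨hab, hc, hd, h1⟩ := hγ
  -- For infinite `diamv` the bound is vacuous; `toReal` below would be a junk value there.
  rcases eq_or_ne (diamv (perp e) P) ⊤ with htop | htop
  · rw [htop, ENNReal.mul_top (by norm_num)]
    exact le_top
  set D : ℝ := (diamv (perp e) P).toReal with hDdef
  have hD0 : 0 ≤ D := ENNReal.toReal_nonneg
  have he1 : ‖e‖ = 1 := by simpa using he
  have hee : e 0 * e 0 + e 1 * e 1 = 1 := by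
    rw [← inner_eq_coords, real_inner_self_eq_norm_sq, he1, one_pow]
  have hp1 : ‖perp e‖ = 1 := by
    have : ‖perp e‖ ^ 2 = 1 := by
      rw [← real_inner_self_eq_norm_sq, inner_eq_coords, perp_zero, perp_one]
      linarith
    nlinarith [norm_nonneg (perp e)]
  let Φ : ℝ × ℝ → E2 := fun p => p.1 • e + p.2 • perp e
  let Q : Set (ℝ × ℝ) := {p | Φ p ∈ P}
  -- `⟪·, e⟫` and `⟪·, perp e⟫` are the coordinates belonging to the parametrization `Φ`.
  have hΦ : ∀ v : E2, Φ (⟪v, e⟫, ⟪v, perp e⟫) = v := by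
    intro v
    ext i
    fin_cases i
    · simp [Φ, inner_eq_coords, perp_zero, perp_one]
      linear_combination v 0 * hee
    · simp [Φ, inner_eq_coords, perp_zero, perp_one]
      linear_combination v 1 * hee
  have hQo : IsOpen Q := hPo.preimage (f := Φ) (by fun_prop)
  have hQ : Convex ℝ Q := by
    intro p hp q hq α β hα hβ hαβ
    have := hPc hp hq hα hβ hαβ
    simp only [Q, mem_ofPred_eq]
    convert this using 1
    simp only [Φ, Prod.fst_add, Prod.snd_add, Prod.smul_fst, Prod.smul_snd, smul_eq_mul]
    module
  have hQD : HeightLE Q D := by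
    intro p hp q hq
    have h2 : ENNReal.ofReal ⟪Φ q - Φ p, perp e⟫ ≤ diamv (perp e) P :=
      le_iSup₂_of_le (Φ p) hp (le_iSup₂_of_le (Φ q) hq le_rfl)
    have h3 := (ENNReal.ofReal_le_iff_le_toReal htop).1 h2
    have h4 : ⟪Φ q - Φ p, perp e⟫ = q.2 - p.2 := by
      simp [Φ, inner_eq_coords, perp_zero, perp_one]
      linear_combination (q.2 - p.2) * hee
    rwa [h4] at h3
  have hder : ∀ w : E2, ∀ u ∈ Icc a b,
      HasDerivWithinAt (fun u => ⟪γ u, w⟫) ⟪γ' u, w⟫ (Icc a b) u := by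
    intro w u hu
    simpa using (hd u hu).inner ℝ (hasDerivWithinAt_const u (Icc a b) w)
  have hbd : ∀ w : E2, ‖w‖ = 1 → ∀ u ∈ Icc a b, |⟪γ' u, w⟫| ≤ 1 := by
    intro w hw u hu
    have := abs_real_inner_le_norm (γ' u) w
    rwa [h1 u hu, hw, one_mul] at this
  have hlip : ∀ w : E2, ‖w‖ = 1 → LipschitzOnWith 1 (fun u => ⟪γ u, w⟫) (Icc a b) := by
    intro w hw
    refine (convex_Icc a b).lipschitzOnWith_of_nnnorm_hasDerivWithin_le (hder w) fun u hu => ?_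
    rw [← NNReal.coe_le_coe]
    exact hbd w hw u hu
  have hmono : MonotoneOn (fun u => ⟪γ u, e⟫) (Icc a b) := by
    refine monotoneOn_of_hasDerivWithinAt_nonneg (convex_Icc a b) (hlip e he1).continuousOn
      (fun u hu => (hder e u (interior_subset hu)).mono interior_subset)
      fun u hu => hdir u (interior_subset hu)
  have hγc : ContinuousOn γ (Icc a b) := fun u hu => (hd u hu).continuousWithinAt
  have hAm : MeasurableSet (γ ⁻¹' P ∩ Icc a b) := by
    obtain ⟨O, hO, hO'⟩ := (_root_.continuousOn_iff'.1 hγc) P hPo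
    rw [hO']
    exact hO.measurableSet.inter measurableSet_Icc
  have h5 := abs_integral_le (y' := fun u => ⟪γ' u, perp e⟫) hQo hQ hQD hD0 (hlip e he1) hmono
    (hlip (perp e) hp1)
    (fun u hu => (hder (perp e) u (Ioo_subset_Icc_self hu)).hasDerivAt (Icc_mem_nhds hu.1 hu.2))
    (hc.inner continuousOn_const) (hbd _ hp1) hAm inter_subset_right
    (fun u hu => by
      simp only [Q, mem_inter_iff, mem_preimage, mem_ofPred_eq, hΦ]
      exact and_iff_left hu)
  calc ENNReal.ofReal |∫ t in γ ⁻¹' P ∩ Set.Icc a b, ⟪γ' t, perp e⟫|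
      ≤ ENNReal.ofReal (6 * D) := ENNReal.ofReal_le_ofReal (by linarith)
    _ = 6 * diamv (perp e) P := by
      rw [ENNReal.ofReal_mul (by norm_num), hDdef, ENNReal.ofReal_toReal htop]
      norm_num

end
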